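/- Suppose X'X/n → Q with Q symmetric positive definite, k₂ = 1, and Q₁₂ = 0. Then for every β ∈ ℝ^k with β₂ = 0 and every t ∈ ℝ^k there exist δ₀ > 0 and ρ₀ ∈ (0,∞) (depending only on t, Q, σ and α) such that: every sequence of estimators F̂_n(t) (measurable functions of Y) satisfying P_{n,β,σ}(|F̂_n(t) − F_{n,β,σ}(t)| > δ) → 0 for every δ > 0 also satisfies sup_{ϑ : ‖ϑ−β‖ < ρ₀/√n} P_{n,ϑ,σ}(|F̂_n(t) − F_{n,ϑ,σ}(t)| > δ₀) → 1 as n → ∞. -/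

import Mathlib

open MeasureTheory Matrix Real Filter Topology ENNReal NNReal

noncomputable section

/-- Euclidean norm of a finite tuple. -/
def enorm2 {ι : Type*} [Fintype ι] (v : ι → ℝ) : ℝ := Real.sqrt (∑ i, v i ^ 2)

/-- The `N(0, σ² I)` distribution on `ι → ℝ`, given by its Lebesgue density. -/
def gaussPi (ι : Type*) [Fintype ι] (σ2 : ℝ) : Measure (ι → ℝ) :=
  volume.withDensity fun x => ENNReal.ofReal
    ((2 * π * σ2) ^ (-(Fintype.card ι : ℝ) / 2) * Real.exp (-(enorm2 x) ^ 2 / (2 * σ2)))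

/-- The Lebesgue density of the `N(0, σ² Q⁻¹)` distribution on `ι → ℝ`
(for `Q` symmetric positive definite). -/
def gaussCovDens {ι : Type*} [Fintype ι] [DecidableEq ι] (σ2 : ℝ) (Q : Matrix ι ι ℝ)
    (x : ι → ℝ) : ℝ :=
  (2 * π * σ2) ^ (-(Fintype.card ι : ℝ) / 2) * Real.sqrt Q.det *
    Real.exp (-(x ⬝ᵥ Q.mulVec x) / (2 * σ2))

/-- The `N(0, σ² Q⁻¹)` distribution on `ι → ℝ` (for `Q` symmetric positive definite),
given by its Lebesgue density. -/
def gaussCov {ι : Type*} [Fintype ι] [DecidableEq ι] (σ2 : ℝ) (Q : Matrix ι ι ℝ) :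
    Measure (ι → ℝ) :=
  volume.withDensity fun x => ENNReal.ofReal (gaussCovDens σ2 Q x)

/-- The positive semidefinite square root of a positive semidefinite matrix
(the definition of the older Mathlib, since removed, over `ℝ`). -/
def Matrix.PosSemidef.sqrt {n : Type*} [Fintype n] [DecidableEq n]
    {A : Matrix n n ℝ} (hA : A.PosSemidef) : Matrix n n ℝ :=
  hA.1.eigenvectorUnitary.1 * diagonal (RCLike.ofReal ∘ Real.sqrt ∘ hA.1.eigenvalues) *
    (star hA.1.eigenvectorUnitary : Matrix n n ℝ)

open Classical in
/-- Symmetric positive semidefinite square root (junk value `0` off the psd cone). -/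
def msqrt {ι : Type*} [Fintype ι] [DecidableEq ι] (A : Matrix ι ι ℝ) : Matrix ι ι ℝ :=
  if h : A.PosSemidef then h.sqrt else 0

open Classical in
/-- Smallest eigenvalue of a symmetric matrix (junk value `0` otherwise). -/
def lamMin {ι : Type*} [Fintype ι] [DecidableEq ι] (A : Matrix ι ι ℝ) : ℝ :=
  if h : A.IsHermitian then ⨅ i, h.eigenvalues i else 0

open Classical in
/-- Largest eigenvalue of a symmetric matrix (junk value `0` otherwise). -/
def lamMax {ι : Type*} [Fintype ι] [DecidableEq ι] (A : Matrix ι ι ℝ) : ℝ :=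
  if h : A.IsHermitian then ⨆ i, h.eigenvalues i else 0

variable {n k₁ k₂ : ℕ}

/-- First block of columns of the design matrix. -/
def X1 (X : Matrix (Fin n) (Fin k₁ ⊕ Fin k₂) ℝ) : Matrix (Fin n) (Fin k₁) ℝ :=
  X.submatrix id Sum.inl

/-- Second block of columns of the design matrix. -/
def X2 (X : Matrix (Fin n) (Fin k₁ ⊕ Fin k₂) ℝ) : Matrix (Fin n) (Fin k₂) ℝ :=
  X.submatrix id Sum.inr

/-- Unrestricted least squares estimator. -/
def betaU (X : Matrix (Fin n) (Fin k₁ ⊕ Fin k₂) ℝ) (Y : Fin n → ℝ) : (Fin k₁ ⊕ Fin k₂) → ℝ :=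
  (Xᵀ * X)⁻¹.mulVec (Xᵀ.mulVec Y)

/-- Restricted least squares estimator. -/
def betaR (X : Matrix (Fin n) (Fin k₁ ⊕ Fin k₂) ℝ) (Y : Fin n → ℝ) : (Fin k₁ ⊕ Fin k₂) → ℝ :=
  Sum.elim (((X1 X)ᵀ * X1 X)⁻¹.mulVec ((X1 X)ᵀ.mulVec Y)) (fun _ => 0)

/-- Risk estimate of the restricted model. -/
def rR (X : Matrix (Fin n) (Fin k₁ ⊕ Fin k₂) ℝ) (σ2 : ℝ) (Y : Fin n → ℝ) : ℝ :=
  Y ⬝ᵥ Y - betaR X Y ⬝ᵥ (Xᵀ * X).mulVec (betaR X Y) + σ2 * (2 * k₁ - n)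

/-- Risk estimate of the unrestricted model. -/
def rU (X : Matrix (Fin n) (Fin k₁ ⊕ Fin k₂) ℝ) (σ2 : ℝ) (Y : Fin n → ℝ) : ℝ :=
  Y ⬝ᵥ Y - betaU X Y ⬝ᵥ (Xᵀ * X).mulVec (betaU X Y) + σ2 * (2 * (k₁ + k₂) - n)

/-- The model averaging weight `λ̂`. -/
def lamHat (α σ2 : ℝ) (X : Matrix (Fin n) (Fin k₁ ⊕ Fin k₂) ℝ) (Y : Fin n → ℝ) : ℝ :=
  Real.exp (-(α * rR X σ2 Y) / σ2) /
    (Real.exp (-(α * rR X σ2 Y) / σ2) + Real.exp (-(α * rU X σ2 Y) / σ2))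

/-- Leung and Barron's model averaging estimator `β̃`. -/
def mavg (α σ2 : ℝ) (X : Matrix (Fin n) (Fin k₁ ⊕ Fin k₂) ℝ) (Y : Fin n → ℝ) :
    (Fin k₁ ⊕ Fin k₂) → ℝ :=
  lamHat α σ2 X Y • betaR X Y + (1 - lamHat α σ2 X Y) • betaU X Y

/-- Projection on the column space of `X₁`. -/
def projR (X : Matrix (Fin n) (Fin k₁ ⊕ Fin k₂) ℝ) : Matrix (Fin n) (Fin n) ℝ :=
  X1 X * ((X1 X)ᵀ * X1 X)⁻¹ * (X1 X)ᵀ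

/-- Projection on the column space of `X`. -/
def projU (X : Matrix (Fin n) (Fin k₁ ⊕ Fin k₂) ℝ) : Matrix (Fin n) (Fin n) ℝ :=
  X * (Xᵀ * X)⁻¹ * Xᵀ

/-- The distribution `P_{n,β,σ}` of `Y = Xβ + u`, `u ~ N(0, σ² Iₙ)`. -/
def Pmeas (X : Matrix (Fin n) (Fin k₁ ⊕ Fin k₂) ℝ) (β : (Fin k₁ ⊕ Fin k₂) → ℝ) (σ2 : ℝ) :
    Measure (Fin n → ℝ) :=
  (gaussPi (Fin n) σ2).map (fun u => X.mulVec β + u)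

/-- The function `h_{a,b}(ξ) = ξ / (1 + a exp(−ξ²/b))`. -/
def hfun (a b ξ : ℝ) : ℝ := ξ / (1 + a * Real.exp (-ξ ^ 2 / b))

/-- The inverse `g_{a,b}` of `h_{a,b}`. -/
def gfun (a b : ℝ) : ℝ → ℝ := Function.invFun (hfun a b)

open Classical in
/-- `g(‖w‖) w / ‖w‖`, with the convention that this is `0` for `w = 0`. -/
def gdir (a b : ℝ) {ι : Type*} [Fintype ι] (w : ι → ℝ) : ι → ℝ :=
  if w = 0 then 0 else (gfun a b (enorm2 w) / enorm2 w) • w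


/-- The finite-sample density `f_{n,β,σ}` of `√n(β̃ − β)` (Theorem 3 of the paper). -/
def fdens {n k₁ k₂ : ℕ} (X : Matrix (Fin n) (Fin k₁ ⊕ Fin k₂) ℝ)
    (β : (Fin k₁ ⊕ Fin k₂) → ℝ) (σ2 α : ℝ) (t : (Fin k₁ ⊕ Fin k₂) → ℝ) : ℝ :=
  let a := Real.exp (2 * α * k₂)
  let b := σ2 / α
  let S := (X2 X)ᵀ * (1 - projR X) * X2 X
  let w := (Real.sqrt n)⁻¹ • (msqrt S).mulVec ((t ∘ Sum.inr) + Real.sqrt n • (β ∘ Sum.inr))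
  (2 * π * σ2) ^ (-((k₁ : ℝ) + k₂) / 2) * Real.sqrt (((n : ℝ)⁻¹ • (Xᵀ * X)).det) *
    Real.exp (-(enorm2 ((Real.sqrt n)⁻¹ •
        ((msqrt ((X1 X)ᵀ * X1 X)).mulVec (t ∘ Sum.inl) +
          ((msqrt ((X1 X)ᵀ * X1 X))⁻¹ * (X1 X)ᵀ * X2 X).mulVec (t ∘ Sum.inr)))) ^ 2 /
      (2 * σ2)) *
    (1 + Real.exp (-(α / σ2) * gfun a b (enorm2 w) ^ 2 + 2 * α * k₂)) ^ (k₂ : ℕ) *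
    (1 + (2 * α / σ2) * gfun a b (enorm2 w) ^ 2 *
        (1 + Real.exp ((α / σ2) * gfun a b (enorm2 w) ^ 2 - 2 * α * k₂))⁻¹)⁻¹ *
    Real.exp (-(enorm2 (gdir a b w - (msqrt S).mulVec (β ∘ Sum.inr))) ^ 2 / (2 * σ2))

/-- The density `f_{∞,γ}` of the limiting distribution (formula (13) of the paper),
stated for a general symmetric positive definite matrix in place of `Q`. -/
def fInfty {k₁ k₂ : ℕ} (Q : Matrix (Fin k₁ ⊕ Fin k₂) (Fin k₁ ⊕ Fin k₂) ℝ) (σ2 α : ℝ)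
    (γ : Fin k₂ → ℝ) (t : (Fin k₁ ⊕ Fin k₂) → ℝ) : ℝ :=
  let a := Real.exp (2 * α * k₂)
  let b := σ2 / α
  let S := Q.toBlocks₂₂ - Q.toBlocks₂₁ * Q.toBlocks₁₁⁻¹ * Q.toBlocks₁₂
  let w := (msqrt S).mulVec ((t ∘ Sum.inr) + γ)
  (2 * π * σ2) ^ (-((k₁ : ℝ) + k₂) / 2) * Real.sqrt Q.det *
    Real.exp (-(enorm2 ((msqrt Q.toBlocks₁₁).mulVec (t ∘ Sum.inl) +
        ((msqrt Q.toBlocks₁₁)⁻¹ * Q.toBlocks₁₂).mulVec (t ∘ Sum.inr))) ^ 2 / (2 * σ2)) *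
    (1 + Real.exp (-(α / σ2) * gfun a b (enorm2 w) ^ 2 + 2 * α * k₂)) ^ (k₂ : ℕ) *
    (1 + (2 * α / σ2) * gfun a b (enorm2 w) ^ 2 *
        (1 + Real.exp ((α / σ2) * gfun a b (enorm2 w) ^ 2 - 2 * α * k₂))⁻¹)⁻¹ *
    Real.exp (-(enorm2 (gdir a b w - (msqrt S).mulVec γ)) ^ 2 / (2 * σ2))


/-- The limiting law (12): the distribution of
`B_∞γ + C_∞Z₁ + [1 + exp(2αk₂) exp(−α‖Z₂ + (Q₂₂ − Q₂₁Q₁₁⁻¹Q₁₂)^{1/2}γ‖²/σ²)]⁻¹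
  · (D_∞Z₂ − B_∞γ)` with `Z₁ ~ N(0, σ²I_{k₁})`, `Z₂ ~ N(0, σ²I_{k₂})` independent. -/
def limitLaw {k₁ k₂ : ℕ} (Q : Matrix (Fin k₁ ⊕ Fin k₂) (Fin k₁ ⊕ Fin k₂) ℝ) (σ2 α : ℝ)
    (γ : Fin k₂ → ℝ) : Measure ((Fin k₁ ⊕ Fin k₂) → ℝ) :=
  ((gaussPi (Fin k₁) σ2).prod (gaussPi (Fin k₂) σ2)).map
    (fun Z : (Fin k₁ → ℝ) × (Fin k₂ → ℝ) =>
      (fromRows (Q.toBlocks₁₁⁻¹ * Q.toBlocks₁₂) (-1)).mulVec γ +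
      (fromRows (msqrt Q.toBlocks₁₁)⁻¹ 0).mulVec Z.1 +
      (1 + Real.exp (2 * α * k₂) *
          Real.exp (-α * (enorm2 (Z.2 +
            (msqrt (Q.toBlocks₂₂ - Q.toBlocks₂₁ * Q.toBlocks₁₁⁻¹ * Q.toBlocks₁₂)).mulVec
              γ)) ^ 2 / σ2))⁻¹ •
        ((fromRows
            (-(Q.toBlocks₁₁⁻¹ * Q.toBlocks₁₂ *
              (msqrt (Q.toBlocks₂₂ - Q.toBlocks₂₁ * Q.toBlocks₁₁⁻¹ * Q.toBlocks₁₂))⁻¹))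
            ((msqrt (Q.toBlocks₂₂ - Q.toBlocks₂₁ * Q.toBlocks₁₁⁻¹ * Q.toBlocks₁₂))⁻¹)).mulVec
            Z.2 -
          (fromRows (Q.toBlocks₁₁⁻¹ * Q.toBlocks₁₂) (-1)).mulVec γ))


/-!
Along the local parameters `ϑₙ = β + h / √n`, with `β` in the restricted model, the law of
`√n(β̃ - ϑₙ)` depends on `n` only through `X'X / n`, and its distribution function at `t` converges
to a limit `p(h)`. When `Q₁₂ = 0` this limit is not constant in `h`: averaging shrinks the second
block by a factor in `(0, 1)` and leaves the first block alone, so that `h = (0, -t₂)` turns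
the limiting event into `{x ≤ t}` for the unrestricted estimator `x`, whereas `h = (0, s - t₂)` with
`s > 0` yields an event that exceeds `{x ≤ t}` by a set with nonempty interior.

The total variation distance of `P_{n,β,σ}` and `P_{n,ϑₙ,σ}` need not be small, but by the
Cauchy-Schwarz inequality `P_{n,ϑₙ,σ}(E) ≤ exp(‖X(ϑₙ - β)‖² / (2σ²)) P_{n,β,σ}(E)^{1/2}`, and the
exponent stays bounded. An estimator that is close to `F_{n,β,σ}(t)` under `P_{n,β,σ}` is therefore
close to this same number under both local alternatives, and it must miss at least one of the two
different limits of `F_{n,ϑₙ,σ}(t)`.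
-/

section GaussianMeasure

open ProbabilityTheory

variable {ι κ κ' : Type*} [Fintype ι] [Fintype κ] [Fintype κ'] {σ2 : ℝ}

lemma enorm2_sq (v : ι → ℝ) : enorm2 v ^ 2 = v ⬝ᵥ v := by
  rw [enorm2, Real.sq_sqrt (Finset.sum_nonneg fun i _ => sq_nonneg _)]
  simp only [dotProduct, sq]

lemma enorm2_smul {c : ℝ} (hc : 0 ≤ c) (v : ι → ℝ) : enorm2 (c • v) = c * enorm2 v := by
  simp only [enorm2, Pi.smul_apply, smul_eq_mul, mul_pow, ← Finset.mul_sum]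
  rw [Real.sqrt_mul (sq_nonneg c), Real.sqrt_sq hc]

/-- The Lebesgue density of `gaussPi ι σ2`. -/
def gaussPiDens (σ2 : ℝ) (x : ι → ℝ) : ℝ≥0∞ :=
  ENNReal.ofReal
    ((2 * π * σ2) ^ (-(Fintype.card ι : ℝ) / 2) * Real.exp (-(enorm2 x) ^ 2 / (2 * σ2)))

lemma measurable_gaussPiDens (σ2 : ℝ) : Measurable (gaussPiDens σ2 : (ι → ℝ) → ℝ≥0∞) := by
  unfold gaussPiDens
  simp only [enorm2_sq, dotProduct]
  fun_prop

lemma gaussPiDens_eq_ofReal_prod (hσ : 0 < σ2) (x : ι → ℝ) :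
    gaussPiDens σ2 x = ENNReal.ofReal (∏ i, gaussianPDFReal 0 σ2.toNNReal (x i)) := by
  simp only [gaussPiDens, gaussianPDFReal, Finset.prod_mul_distrib, ← Real.exp_sum,
    Real.coe_toNNReal _ hσ.le, sub_zero, Finset.prod_const, Finset.card_univ, enorm2_sq,
    dotProduct, ← sq, ← Finset.sum_div, Finset.sum_neg_distrib]
  congr 2
  rw [← Real.rpow_natCast, Real.sqrt_eq_rpow, ← Real.rpow_neg (by positivity),
    ← Real.rpow_mul (by positivity)]
  ring_nf

lemma gaussPi_eq_pi (hσ : 0 < σ2) :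
    gaussPi ι σ2 = Measure.pi fun _ => gaussianReal 0 σ2.toNNReal := by
  have hv : σ2.toNNReal ≠ 0 := by simpa using hσ
  refine (Measure.pi_eq fun s hs => ?_).symm
  have hint : Integrable (fun x : ι → ℝ => ∏ i, gaussianPDFReal 0 σ2.toNNReal (x i))
      (Measure.pi fun i => volume.restrict (s i)) :=
    .fintype_prod fun _ => (integrable_gaussianPDFReal 0 _).integrableOn
  calc gaussPi ι σ2 (Set.univ.pi s)
      = ∫⁻ x in Set.univ.pi s, ENNReal.ofReal (∏ i, gaussianPDFReal 0 σ2.toNNReal (x i)) := by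
        rw [gaussPi, withDensity_apply _ (MeasurableSet.univ_pi hs)]
        exact lintegral_congr fun x => gaussPiDens_eq_ofReal_prod hσ x
    _ = ENNReal.ofReal (∏ i, ∫ y in s i, gaussianPDFReal 0 σ2.toNNReal y) := by
        rw [volume_pi, Measure.restrict_pi_pi, ← ofReal_integral_eq_lintegral_ofReal hint
          (ae_of_all _ fun x => Finset.prod_nonneg fun i _ => gaussianPDFReal_nonneg _ _ _),
          integral_fintype_prod_eq_prod]
    _ = ∏ i, gaussianReal 0 σ2.toNNReal (s i) := by
        rw [ENNReal.ofReal_prod_of_nonneg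
          fun i _ => integral_nonneg fun x => gaussianPDFReal_nonneg _ _ _]
        simp only [gaussianReal_apply_eq_integral _ hv]

lemma isProbabilityMeasure_gaussPi (hσ : 0 < σ2) : IsProbabilityMeasure (gaussPi ι σ2) := by
  rw [gaussPi_eq_pi hσ]
  infer_instance

lemma gaussPi_absolutelyContinuous (σ2 : ℝ) : gaussPi ι σ2 ≪ volume :=
  withDensity_absolutelyContinuous _ _

lemma isOpenPosMeasure_gaussPi (hσ : 0 < σ2) : (gaussPi ι σ2).IsOpenPosMeasure := by
  have hac : (volume : Measure (ι → ℝ)) ≪ gaussPi ι σ2 :=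
    withDensity_absolutelyContinuous' (measurable_gaussPiDens σ2).aemeasurable
      (ae_of_all _ fun x => by rw [ENNReal.ofReal_ne_zero_iff]; positivity)
  exact hac.isOpenPosMeasure

lemma charFunDual_gaussPi [DecidableEq κ] (hσ : 0 < σ2) (L : StrongDual ℝ (κ → ℝ)) :
    charFunDual (gaussPi κ σ2) L =
      Complex.exp (-(σ2 / 2 * ∑ i, L (Pi.single i 1) ^ 2 : ℝ)) := by
  have hcoord (i : κ) : charFunDual (gaussianReal 0 σ2.toNNReal)
      (L.comp (ContinuousLinearMap.single ℝ (fun _ => ℝ) i)) =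
      Complex.exp (-(σ2 / 2 * L (Pi.single i 1) ^ 2 : ℝ)) := by
    have hL : (L.comp (ContinuousLinearMap.single ℝ (fun _ => ℝ) i) : ℝ → ℝ) =
        (L (Pi.single i 1) * ·) := by
      ext y
      rw [mul_comm, ← smul_eq_mul, ← map_smul, ← Pi.single_smul, smul_eq_mul, mul_one]
      rfl
    rw [charFunDual_eq_charFun_map_one, hL, gaussianReal_map_const_mul, charFun_gaussianReal]
    congr 1
    rw [mul_zero, Complex.ofReal_zero, mul_zero, zero_mul, zero_sub, NNReal.coe_mul,
      Real.coe_toNNReal _ hσ.le, NNReal.coe_mk]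
    push_cast
    ring
  rw [gaussPi_eq_pi hσ, charFunDual_pi, Finset.prod_congr rfl fun i _ => hcoord i,
    ← Complex.exp_sum]
  push_cast
  rw [Finset.mul_sum, Finset.sum_neg_distrib]

lemma charFunDual_map_mulVec_gaussPi [DecidableEq ι] (hσ : 0 < σ2)
    (M : Matrix ι κ ℝ) (L : StrongDual ℝ (ι → ℝ)) :
    charFunDual ((gaussPi κ σ2).map (M *ᵥ ·)) L =
      Complex.exp (-(σ2 / 2 * ((fun i => L (Pi.single i 1)) ⬝ᵥ
        (M * Mᵀ) *ᵥ fun i => L (Pi.single i 1)) : ℝ)) := by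
  classical
  set l : ι → ℝ := fun i => L (Pi.single i 1)
  let T : (κ → ℝ) →L[ℝ] (ι → ℝ) := M.mulVecLin.toContinuousLinearMap
  have hLT (i : κ) : L.comp T (Pi.single i 1) = (Mᵀ *ᵥ l) i := by
    have hcol : M.col i = ∑ j, M j i • Pi.single j (1 : ℝ) := by
      ext j; simp [Finset.sum_apply, Pi.single_apply]
    simp [T, hcol, mulVec, dotProduct, l]
  have := isProbabilityMeasure_gaussPi (ι := κ) hσ
  change charFunDual ((gaussPi κ σ2).map T) L = _
  rw [charFunDual_map, charFunDual_gaussPi hσ]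
  simp only [hLT]
  rw [← mulVec_mulVec, dotProduct_mulVec, ← mulVec_transpose]
  simp only [dotProduct, sq]

lemma map_mulVec_gaussPi_congr {m : Type*} [Finite m] (hσ : 0 < σ2) {M : Matrix m κ ℝ}
    {N : Matrix m κ' ℝ} (h : M * Mᵀ = N * Nᵀ) :
    (gaussPi κ σ2).map (M *ᵥ ·) = (gaussPi κ' σ2).map (N *ᵥ ·) := by
  classical
  have := Fintype.ofFinite m
  have := isProbabilityMeasure_gaussPi (ι := κ) hσ
  have := isProbabilityMeasure_gaussPi (ι := κ') hσ
  have : IsProbabilityMeasure ((gaussPi κ σ2).map (M *ᵥ ·)) :=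
    Measure.isProbabilityMeasure_map (by fun_prop)
  have : IsProbabilityMeasure ((gaussPi κ' σ2).map (N *ᵥ ·)) :=
    Measure.isProbabilityMeasure_map (by fun_prop)
  refine Measure.ext_of_charFunDual (funext fun L => ?_)
  rw [charFunDual_map_mulVec_gaussPi hσ, charFunDual_map_mulVec_gaussPi hσ, h]

lemma gaussPiDens_sub (hσ : 0 < σ2) (x d : ι → ℝ) :
    gaussPiDens σ2 (x - d) = ENNReal.ofReal (Real.exp (d ⬝ᵥ d / (2 * σ2))) *
      (gaussPiDens σ2 x ^ (1 / 2 : ℝ) * gaussPiDens σ2 (x - (2 : ℝ) • d) ^ (1 / 2 : ℝ)) := by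
  have hexp : -((x - d) ⬝ᵥ (x - d)) / (2 * σ2) = d ⬝ᵥ d / (2 * σ2) +
      (-(x ⬝ᵥ x) / (2 * σ2) + -((x - (2 : ℝ) • d) ⬝ᵥ (x - (2 : ℝ) • d)) / (2 * σ2)) * (1 / 2) := by
    simp only [sub_dotProduct, dotProduct_sub, smul_dotProduct, dotProduct_smul,
      smul_eq_mul, dotProduct_comm d x]
    field_simp
    ring
  have hmul {c a b : ℝ} (hc : 0 ≤ c) : (c * Real.exp a * (c * Real.exp b)) ^ (1 / 2 : ℝ) =
      c * Real.exp ((a + b) * (1 / 2)) := by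
    rw [mul_mul_mul_comm, ← Real.exp_add, Real.mul_rpow (by positivity) (by positivity),
      ← Real.sqrt_eq_rpow, Real.sqrt_mul_self hc, ← Real.exp_mul]
  simp only [gaussPiDens, enorm2_sq]
  rw [← ENNReal.mul_rpow_of_nonneg _ _ (by norm_num), ← ENNReal.ofReal_mul (by positivity),
    ENNReal.ofReal_rpow_of_nonneg (by positivity) (by norm_num), hmul (by positivity),
    ← ENNReal.ofReal_mul (by positivity), hexp, Real.exp_add]
  ring_nf

lemma gaussPi_preimage_add (σ2 : ℝ) (d : ι → ℝ) {E : Set (ι → ℝ)} (hE : MeasurableSet E) :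
    gaussPi ι σ2 ((d + ·) ⁻¹' E) = ∫⁻ y in E, gaussPiDens σ2 (y - d) := by
  have hshift := (measurePreserving_add_left volume d).setLIntegral_comp_preimage
    hE ((measurable_gaussPiDens σ2).comp (measurable_id.sub_const d))
  simp only [Function.comp_apply, id, add_sub_cancel_left] at hshift
  rw [← hshift]
  exact withDensity_apply _ (measurable_const_add d hE)

lemma gaussPi_preimage_add_le (hσ : 0 < σ2) (d : ι → ℝ) {E : Set (ι → ℝ)}
    (hE : MeasurableSet E) :
    gaussPi ι σ2 ((d + ·) ⁻¹' E) ≤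
      ENNReal.ofReal (Real.exp (d ⬝ᵥ d / (2 * σ2))) * gaussPi ι σ2 E ^ (1 / 2 : ℝ) := by
  have := isProbabilityMeasure_gaussPi (ι := ι) hσ
  have hmeas (w : ι → ℝ) : Measurable fun y => gaussPiDens σ2 (y - w) :=
    (measurable_gaussPiDens σ2).comp (measurable_id.sub_const w)
  calc gaussPi ι σ2 ((d + ·) ⁻¹' E)
      = ENNReal.ofReal (Real.exp (d ⬝ᵥ d / (2 * σ2))) * ∫⁻ y in E,
          gaussPiDens σ2 y ^ (1 / 2 : ℝ) * gaussPiDens σ2 (y - (2 : ℝ) • d) ^ (1 / 2 : ℝ) := by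
        rw [gaussPi_preimage_add σ2 d hE, ← lintegral_const_mul' _ _ ENNReal.ofReal_ne_top]
        exact lintegral_congr fun y => gaussPiDens_sub hσ y d
    _ ≤ ENNReal.ofReal (Real.exp (d ⬝ᵥ d / (2 * σ2))) *
          ((∫⁻ y in E, gaussPiDens σ2 y) ^ (1 / 2 : ℝ) *
            (∫⁻ y in E, gaussPiDens σ2 (y - (2 : ℝ) • d)) ^ (1 / 2 : ℝ)) := by
        gcongr
        exact ENNReal.lintegral_mul_norm_pow_le (measurable_gaussPiDens σ2).aemeasurable
          (hmeas _).aemeasurable (by norm_num) (by norm_num) (by norm_num)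
    _ = ENNReal.ofReal (Real.exp (d ⬝ᵥ d / (2 * σ2))) * (gaussPi ι σ2 E ^ (1 / 2 : ℝ) *
          gaussPi ι σ2 (((2 : ℝ) • d + ·) ⁻¹' E) ^ (1 / 2 : ℝ)) := by
        rw [gaussPi_preimage_add σ2 _ hE, ← withDensity_apply _ hE]
        rfl
    _ ≤ _ := by
        gcongr
        exact mul_le_of_le_one_right' (ENNReal.rpow_le_one prob_le_one (by norm_num))

end GaussianMeasure

section LinearModel

variable {σ2 : ℝ} {n k₁ k₂ : ℕ}

lemma Pmeas_apply (X : Matrix (Fin n) (Fin k₁ ⊕ Fin k₂) ℝ) (β : Fin k₁ ⊕ Fin k₂ → ℝ) (σ2 : ℝ)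
    {E : Set (Fin n → ℝ)} (hE : MeasurableSet E) :
    Pmeas X β σ2 E = gaussPi (Fin n) σ2 ((X *ᵥ β + ·) ⁻¹' E) :=
  Measure.map_apply (measurable_const_add _) hE

lemma isProbabilityMeasure_Pmeas (X : Matrix (Fin n) (Fin k₁ ⊕ Fin k₂) ℝ)
    (β : Fin k₁ ⊕ Fin k₂ → ℝ) (hσ : 0 < σ2) : IsProbabilityMeasure (Pmeas X β σ2) :=
  have := isProbabilityMeasure_gaussPi (ι := Fin n) hσ
  Measure.isProbabilityMeasure_map (measurable_const_add _).aemeasurable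

lemma Pmeas_le (X : Matrix (Fin n) (Fin k₁ ⊕ Fin k₂) ℝ) (β ϑ : Fin k₁ ⊕ Fin k₂ → ℝ)
    (hσ : 0 < σ2) {E : Set (Fin n → ℝ)} (hE : MeasurableSet E) :
    Pmeas X ϑ σ2 E ≤
      ENNReal.ofReal (Real.exp ((ϑ - β) ⬝ᵥ (Xᵀ * X) *ᵥ (ϑ - β) / (2 * σ2))) *
        Pmeas X β σ2 E ^ (1 / 2 : ℝ) := by
  have hquad : (ϑ - β) ⬝ᵥ (Xᵀ * X) *ᵥ (ϑ - β) = (X *ᵥ (ϑ - β)) ⬝ᵥ (X *ᵥ (ϑ - β)) := by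
    rw [← mulVec_mulVec, dotProduct_mulVec, vecMul_transpose]
  have hshift : (X *ᵥ ϑ + ·) ⁻¹' E = (X *ᵥ (ϑ - β) + ·) ⁻¹' ((X *ᵥ β + ·) ⁻¹' E) := by
    ext u
    simp only [Set.mem_preimage, mulVec_sub, ← add_assoc, add_sub_cancel]
  rw [Pmeas_apply _ _ _ hE, Pmeas_apply _ _ _ hE, hquad, hshift]
  exact gaussPi_preimage_add_le hσ _ (measurable_const_add _ hE)

lemma tendsto_Pmeas_zero_of_eventually_quadForm_le
    {X : ∀ n : ℕ, Matrix (Fin n) (Fin k₁ ⊕ Fin k₂) ℝ} {β ϑ : ℕ → Fin k₁ ⊕ Fin k₂ → ℝ}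
    (hσ : 0 < σ2) {E : ∀ n : ℕ, Set (Fin n → ℝ)} (hE : ∀ n, MeasurableSet (E n)) {C : ℝ}
    (hC : ∀ᶠ n in atTop, (ϑ n - β n) ⬝ᵥ ((X n)ᵀ * X n) *ᵥ (ϑ n - β n) ≤ C)
    (h0 : Tendsto (fun n => Pmeas (X n) (β n) σ2 (E n)) atTop (𝓝 0)) :
    Tendsto (fun n => Pmeas (X n) (ϑ n) σ2 (E n)) atTop (𝓝 0) := by
  have hbound : Tendsto (fun n => ENNReal.ofReal (Real.exp (C / (2 * σ2))) *
      Pmeas (X n) (β n) σ2 (E n) ^ (1 / 2 : ℝ)) atTop (𝓝 0) := by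
    simpa using ENNReal.Tendsto.const_mul (h0.ennrpow_const (1 / 2))
      (.inr (ENNReal.ofReal_ne_top (r := Real.exp (C / (2 * σ2)))))
  refine tendsto_of_tendsto_of_tendsto_of_le_of_le' tendsto_const_nhds hbound
    (.of_forall fun _ => zero_le) ?_
  filter_upwards [hC] with n hn
  exact (Pmeas_le (X n) (β n) (ϑ n) hσ (hE n)).trans (by gcongr)

end LinearModel

section Breakdown

lemma one_sub_measure_le_of_two_mul_lt {Ω : Type*} [MeasurableSpace Ω] (μ : Measure Ω)
    [IsProbabilityMeasure μ] (T : Ω → ℝ) {c f δ : ℝ} (hsep : 2 * δ < |f - c|) :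
    1 - μ {ω | δ < |T ω - c|} ≤ μ {ω | δ < |T ω - f|} := by
  have hcover : {ω | δ < |T ω - f|} ∪ {ω | δ < |T ω - c|} = Set.univ := by
    refine Set.eq_univ_of_forall fun ω => ?_
    by_contra! hω
    simp only [Set.mem_union, Set.mem_ofPred_eq, not_or, not_lt] at hω
    have := abs_sub_le f (T ω) c
    rw [abs_sub_comm f (T ω)] at this
    linarith
  rw [tsub_le_iff_right, ← measure_univ (μ := μ), ← hcover]
  exact measure_union_le _ _

lemma tendsto_iSup_measure_lt_abs_sub {γ Θ : Type*} {l : Filter γ} {Ω : γ → Type*}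
    [∀ n, MeasurableSpace (Ω n)] (P : ∀ n, Θ → Measure (Ω n)) [∀ n ϑ, IsProbabilityMeasure (P n ϑ)]
    {F : γ → Θ → ℝ} {T : ∀ n, Ω n → ℝ} {c : γ → ℝ} {U : γ → Set Θ} {ϑ₀ ϑ₁ : γ → Θ} {δ : ℝ}
    (hϑ₀ : ∀ᶠ n in l, ϑ₀ n ∈ U n) (hϑ₁ : ∀ᶠ n in l, ϑ₁ n ∈ U n)
    (hsep : ∀ᶠ n in l, 4 * δ < |F n (ϑ₀ n) - F n (ϑ₁ n)|)
    (h₀ : Tendsto (fun n => P n (ϑ₀ n) {ω | δ < |T n ω - c n|}) l (𝓝 0))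
    (h₁ : Tendsto (fun n => P n (ϑ₁ n) {ω | δ < |T n ω - c n|}) l (𝓝 0)) :
    Tendsto (fun n => ⨆ ϑ ∈ U n, P n ϑ {ω | δ < |T n ω - F n ϑ|}) l (𝓝 1) := by
  have hlower := ENNReal.Tendsto.sub (tendsto_const_nhds (x := (1 : ℝ≥0∞))) (h₀.add h₁)
    (.inl ENNReal.one_ne_top)
  rw [add_zero, tsub_zero] at hlower
  refine tendsto_of_tendsto_of_tendsto_of_le_of_le' hlower tendsto_const_nhds ?_
    (.of_forall fun n => iSup₂_le fun _ _ => prob_le_one)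
  filter_upwards [hϑ₀, hϑ₁, hsep] with n hn₀ hn₁ hn
  have hfar : 2 * δ < |F n (ϑ₀ n) - c n| ∨ 2 * δ < |F n (ϑ₁ n) - c n| := by
    by_contra! hnear
    have := abs_sub_le (F n (ϑ₀ n)) (c n) (F n (ϑ₁ n))
    rw [abs_sub_comm (c n)] at this
    linarith
  obtain hfar | hfar := hfar
  · refine le_iSup₂_of_le (ϑ₀ n) hn₀ (le_trans ?_ (one_sub_measure_le_of_two_mul_lt _ _ hfar))
    exact tsub_le_tsub_left le_self_add _
  · refine le_iSup₂_of_le (ϑ₁ n) hn₁ (le_trans ?_ (one_sub_measure_le_of_two_mul_lt _ _ hfar))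
    exact tsub_le_tsub_left le_add_self _

end Breakdown

section Averaging

variable {ι κ : Type*} [Fintype ι] [DecidableEq ι] [Fintype κ] [DecidableEq κ]
  {G : Matrix (ι ⊕ κ) (ι ⊕ κ) ℝ}

/-- The matrix of `b ↦ b - p`, where `p` is the `G`-orthogonal projection of `b` on the restricted
parameter space, i.e. on the vectors whose second block vanishes. -/
def restrictedResidual (G : Matrix (ι ⊕ κ) (ι ⊕ κ) ℝ) : Matrix (ι ⊕ κ) (ι ⊕ κ) ℝ :=
  fromBlocks 0 (-(G.toBlocks₁₁⁻¹ * G.toBlocks₁₂)) 0 1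

/-- The weight `λ̂` of the restricted estimator, as a function of the unrestricted estimate `b` and
of the Gram matrix `G` of the design; the two risk estimates differ by the squared `G`-norm of the
residual of `b`, up to the penalty for the additional `κ` parameters. -/
def averagingWeight (α σ2 : ℝ) (G : Matrix (ι ⊕ κ) (ι ⊕ κ) ℝ) (b : ι ⊕ κ → ℝ) : ℝ :=
  (1 + Real.exp (α / σ2 * ((restrictedResidual G *ᵥ b) ⬝ᵥ G *ᵥ restrictedResidual G *ᵥ b -
    2 * σ2 * Fintype.card κ)))⁻¹

/-- The model averaging estimate, as a function of the unrestricted estimate `b` and of the Gram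
matrix `G` of the design. -/
def averagedEstimate (α σ2 : ℝ) (G : Matrix (ι ⊕ κ) (ι ⊕ κ) ℝ) (b : ι ⊕ κ → ℝ) : ι ⊕ κ → ℝ :=
  b - averagingWeight α σ2 G b • restrictedResidual G *ᵥ b

lemma averagingWeight_lt_one (α σ2 : ℝ) (b : ι ⊕ κ → ℝ) : averagingWeight α σ2 G b < 1 :=
  inv_lt_one_of_one_lt₀ (lt_add_of_pos_right 1 (Real.exp_pos _))

lemma averagingWeight_pos (α σ2 : ℝ) (b : ι ⊕ κ → ℝ) : 0 < averagingWeight α σ2 G b := by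
  unfold averagingWeight
  positivity

lemma continuous_averagedEstimate (α σ2 : ℝ) (G : Matrix (ι ⊕ κ) (ι ⊕ κ) ℝ) :
    Continuous (averagedEstimate α σ2 G) := by
  have hweight : Continuous (averagingWeight α σ2 G) := by
    unfold averagingWeight
    exact Continuous.inv₀ (by fun_prop) fun b => by positivity
  unfold averagedEstimate
  fun_prop

lemma restrictedResidual_mulVec (G : Matrix (ι ⊕ κ) (ι ⊕ κ) ℝ) (b : ι ⊕ κ → ℝ) :
    restrictedResidual G *ᵥ b =
      Sum.elim (-((G.toBlocks₁₁⁻¹ * G.toBlocks₁₂) *ᵥ (b ∘ Sum.inr))) (b ∘ Sum.inr) := by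
  rw [restrictedResidual, fromBlocks_mulVec]
  simp only [zero_mulVec, neg_mulVec, one_mulVec, zero_add]

lemma restrictedResidual_mulVec_eq_zero {b : ι ⊕ κ → ℝ} (hb : b ∘ Sum.inr = 0) :
    restrictedResidual G *ᵥ b = 0 := by
  rw [restrictedResidual_mulVec, hb, mulVec_zero, neg_zero, Sum.elim_zero_zero]

omit [Fintype κ] in
lemma restrictedResidual_smul {c : ℝ} (hc : c ≠ 0) (hG : G.PosDef) :
    restrictedResidual (c • G) = restrictedResidual G := by
  have hG₁₁ : G.toBlocks₁₁.PosDef := hG.submatrix Sum.inl_injective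
  have hinv : (c • G.toBlocks₁₁)⁻¹ = c⁻¹ • G.toBlocks₁₁⁻¹ :=
    G.toBlocks₁₁.inv_smul' (Units.mk0 c hc) hG₁₁.det_pos.ne'.isUnit
  change fromBlocks 0 (-((c • G.toBlocks₁₁)⁻¹ * c • G.toBlocks₁₂)) 0 1 = _
  rw [hinv, Matrix.smul_mul, Matrix.mul_smul, inv_smul_smul₀ hc, restrictedResidual]

lemma dotProduct_mulVec_restrictedResidual (hG : G.PosDef) {e : ι ⊕ κ → ℝ}
    (he : e ∘ Sum.inr = 0) (b : ι ⊕ κ → ℝ) :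
    e ⬝ᵥ G *ᵥ restrictedResidual G *ᵥ b = 0 := by
  have hG₁₁ : G.toBlocks₁₁.PosDef := hG.submatrix Sum.inl_injective
  have htop : G * restrictedResidual G = fromBlocks 0 0 0
      (G.toBlocks₂₁ * -(G.toBlocks₁₁⁻¹ * G.toBlocks₁₂) + G.toBlocks₂₂) := by
    conv_lhs => rw [← fromBlocks_toBlocks G]
    rw [restrictedResidual, fromBlocks_multiply]
    simp [← Matrix.mul_assoc, mul_nonsing_inv _ hG₁₁.det_pos.ne'.isUnit]
  rw [mulVec_mulVec, htop, ← Sum.elim_comp_inl_inr e, he, fromBlocks_mulVec]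
  simp

lemma quadForm_sub_restrictedResidual (hG : G.PosDef) (b : ι ⊕ κ → ℝ) :
    b ⬝ᵥ G *ᵥ b - (b - restrictedResidual G *ᵥ b) ⬝ᵥ G *ᵥ (b - restrictedResidual G *ᵥ b) =
      (restrictedResidual G *ᵥ b) ⬝ᵥ G *ᵥ restrictedResidual G *ᵥ b := by
  set r := restrictedResidual G *ᵥ b with hr
  have he : (b - r) ∘ Sum.inr = 0 := by
    rw [hr, restrictedResidual_mulVec]
    ext j
    simp
  have horth : (b - r) ⬝ᵥ G *ᵥ r = 0 := dotProduct_mulVec_restrictedResidual hG he b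
  have hsymm : r ⬝ᵥ G *ᵥ b = b ⬝ᵥ G *ᵥ r := by
    rw [dotProduct_mulVec, ← mulVec_transpose, ← conjTranspose_eq_transpose_of_trivial, hG.1.eq,
      dotProduct_comm]
  simp only [sub_dotProduct, mulVec_sub, dotProduct_sub] at horth ⊢
  linarith

lemma averagingWeight_smul (α σ2 : ℝ) {c : ℝ} (hc : c ≠ 0) (hG : G.PosDef) (b : ι ⊕ κ → ℝ) :
    averagingWeight α σ2 ((c ^ 2)⁻¹ • G) (c • b) = averagingWeight α σ2 G b := by
  rw [averagingWeight, restrictedResidual_smul (by positivity) hG, averagingWeight]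
  simp only [mulVec_smul, smul_mulVec, dotProduct_smul, smul_dotProduct, smul_eq_mul]
  congr 5
  field_simp

lemma smul_averagedEstimate_sub (α σ2 : ℝ) {c : ℝ} (hc : c ≠ 0) (hG : G.PosDef)
    {β : ι ⊕ κ → ℝ} (hβ : β ∘ Sum.inr = 0) (b : ι ⊕ κ → ℝ) :
    c • (averagedEstimate α σ2 G b - β) =
      averagedEstimate α σ2 ((c ^ 2)⁻¹ • G) (c • (b - β)) := by
  have hres : restrictedResidual G *ᵥ (b - β) = restrictedResidual G *ᵥ b := by
    rw [mulVec_sub, restrictedResidual_mulVec_eq_zero hβ, sub_zero]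
  have hweight : averagingWeight α σ2 G (b - β) = averagingWeight α σ2 G b := by
    simp only [averagingWeight, hres]
  rw [averagedEstimate, averagedEstimate, averagingWeight_smul α σ2 hc hG, hweight,
    restrictedResidual_smul (by positivity) hG, mulVec_smul, hres]
  module

end Averaging

section LeastSquares

variable {n k₁ k₂ : ℕ} {X : Matrix (Fin n) (Fin k₁ ⊕ Fin k₂) ℝ}

lemma betaR_eq_sub_restrictedResidual (hX : (Xᵀ * X).PosDef) (Y : Fin n → ℝ) :
    betaR X Y = betaU X Y - restrictedResidual (Xᵀ * X) *ᵥ betaU X Y := by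
  set G := Xᵀ * X
  set b := betaU X Y with hb
  have hG₁₁ : G.toBlocks₁₁.PosDef := hX.submatrix Sum.inl_injective
  have hnormal : G *ᵥ b = Xᵀ *ᵥ Y := by
    rw [hb, betaU, mulVec_mulVec, mul_nonsing_inv _ hX.det_pos.ne'.isUnit, one_mulVec]
  have hnormal₁ : (X1 X)ᵀ *ᵥ Y =
      G.toBlocks₁₁ *ᵥ (b ∘ Sum.inl) + G.toBlocks₁₂ *ᵥ (b ∘ Sum.inr) := by
    calc (X1 X)ᵀ *ᵥ Y = (G *ᵥ b) ∘ Sum.inl := by rw [hnormal]; rfl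
      _ = _ := by
        conv_lhs => rw [← fromBlocks_toBlocks G, fromBlocks_mulVec, Sum.elim_comp_inl]
  have hgram : (X1 X)ᵀ * X1 X = G.toBlocks₁₁ := rfl
  have hinv := nonsing_inv_mul G.toBlocks₁₁ hG₁₁.det_pos.ne'.isUnit
  rw [betaR, hnormal₁, hgram, mulVec_add, mulVec_mulVec, mulVec_mulVec, hinv, one_mulVec,
    restrictedResidual_mulVec]
  ext (i | j) <;> simp

lemma rR_sub_rU (hX : (Xᵀ * X).PosDef) (σ2 : ℝ) (Y : Fin n → ℝ) :
    rR X σ2 Y - rU X σ2 Y =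
      (restrictedResidual (Xᵀ * X) *ᵥ betaU X Y) ⬝ᵥ (Xᵀ * X) *ᵥ
        restrictedResidual (Xᵀ * X) *ᵥ betaU X Y - 2 * σ2 * Fintype.card (Fin k₂) := by
  rw [rR, rU, betaR_eq_sub_restrictedResidual hX, ← quadForm_sub_restrictedResidual hX,
    Fintype.card_fin]
  ring

lemma lamHat_eq_averagingWeight (hX : (Xᵀ * X).PosDef) (α σ2 : ℝ) (Y : Fin n → ℝ) :
    lamHat α σ2 X Y = averagingWeight α σ2 (Xᵀ * X) (betaU X Y) := by
  have hexp : Real.exp (-(α * rU X σ2 Y) / σ2) = Real.exp (-(α * rR X σ2 Y) / σ2) *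
      Real.exp (α / σ2 * (rR X σ2 Y - rU X σ2 Y)) := by
    rw [← Real.exp_add]
    ring_nf
  rw [lamHat, averagingWeight, ← rR_sub_rU hX, hexp]
  field_simp

lemma mavg_eq_averagedEstimate (hX : (Xᵀ * X).PosDef) (α σ2 : ℝ) (Y : Fin n → ℝ) :
    mavg α σ2 X Y = averagedEstimate α σ2 (Xᵀ * X) (betaU X Y) := by
  rw [mavg, lamHat_eq_averagingWeight hX, betaR_eq_sub_restrictedResidual hX, averagedEstimate]
  module

lemma measurable_mavg (hX : (Xᵀ * X).PosDef) (α σ2 : ℝ) : Measurable (mavg α σ2 X) := by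
  have hbetaU : Continuous (betaU X) := by
    unfold betaU
    fun_prop
  rw [funext (mavg_eq_averagedEstimate hX α σ2)]
  exact ((continuous_averagedEstimate α σ2 _).comp hbetaU).measurable

lemma betaU_mulVec_add (hX : (Xᵀ * X).PosDef) (ϑ : Fin k₁ ⊕ Fin k₂ → ℝ) (u : Fin n → ℝ) :
    betaU X (X *ᵥ ϑ + u) = ϑ + ((Xᵀ * X)⁻¹ * Xᵀ) *ᵥ u := by
  rw [betaU, mulVec_add, mulVec_add, mulVec_mulVec, mulVec_mulVec, mulVec_mulVec,
    Matrix.mul_assoc, nonsing_inv_mul _ hX.det_pos.ne'.isUnit, one_mulVec]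

end LeastSquares

section MatrixLimits

variable {m n p γ R : Type*} [Fintype n] {l : Filter γ} [NonUnitalNonAssocSemiring R]
  [TopologicalSpace R] [IsTopologicalSemiring R]

lemma tendsto_mulVec {A : γ → Matrix m n R} {A₀ : Matrix m n R} {x : γ → n → R} {x₀ : n → R}
    (hA : Tendsto A l (𝓝 A₀)) (hx : Tendsto x l (𝓝 x₀)) :
    Tendsto (fun k => A k *ᵥ x k) l (𝓝 (A₀ *ᵥ x₀)) :=
  ((continuous_fst.matrix_mulVec continuous_snd).tendsto (A₀, x₀)).comp (hA.prodMk_nhds hx)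

lemma tendsto_dotProduct {x y : γ → n → R} {x₀ y₀ : n → R}
    (hx : Tendsto x l (𝓝 x₀)) (hy : Tendsto y l (𝓝 y₀)) :
    Tendsto (fun k => x k ⬝ᵥ y k) l (𝓝 (x₀ ⬝ᵥ y₀)) :=
  ((continuous_fst.dotProduct continuous_snd).tendsto (x₀, y₀)).comp (hx.prodMk_nhds hy)

lemma tendsto_matrix_mul {A : γ → Matrix m n R} {A₀ : Matrix m n R} {B : γ → Matrix n p R}
    {B₀ : Matrix n p R} (hA : Tendsto A l (𝓝 A₀)) (hB : Tendsto B l (𝓝 B₀)) :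
    Tendsto (fun k => A k * B k) l (𝓝 (A₀ * B₀)) :=
  tendsto_pi_nhds.2 fun i => tendsto_pi_nhds.2 fun j => tendsto_finsetSum _ fun q _ =>
    (tendsto_pi_nhds.1 (tendsto_pi_nhds.1 hA i) q).mul
      (tendsto_pi_nhds.1 (tendsto_pi_nhds.1 hB q) j)

lemma tendsto_matrix_inv {K : Type*} [Field K] [TopologicalSpace K] [IsTopologicalDivisionRing K]
    [DecidableEq n] {A : γ → Matrix n n K} {A₀ : Matrix n n K} (hA₀ : A₀.det ≠ 0)
    (hA : Tendsto A l (𝓝 A₀)) : Tendsto (fun k => (A k)⁻¹) l (𝓝 A₀⁻¹) := by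
  refine (continuousAt_matrix_inv A₀ ?_).tendsto.comp hA
  rw [Ring.inverse_eq_inv']
  exact continuousAt_inv₀ hA₀

lemma eventually_posDef_of_tendsto [Finite m] {A : γ → Matrix m m ℝ} {A₀ : Matrix m m ℝ}
    (hA₀ : A₀.PosDef) (hpos : ∀ k, (A k).PosSemidef) (hA : Tendsto A l (𝓝 A₀)) :
    ∀ᶠ k in l, (A k).PosDef := by
  classical
  have := Fintype.ofFinite m
  have hdet : Tendsto (fun k => (A k).det) l (𝓝 A₀.det) :=
    (continuous_id.matrix_det.tendsto A₀).comp hA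
  filter_upwards [hdet.eventually_ne hA₀.det_pos.ne'] with k hk
  exact (hpos k).posDef_iff_det_ne_zero.2 hk

end MatrixLimits

section AveragingLimits

variable {ι κ γ : Type*} [Fintype ι] [DecidableEq ι] [Fintype κ] [DecidableEq κ] {l : Filter γ}
  {A : γ → Matrix (ι ⊕ κ) (ι ⊕ κ) ℝ} {Q : Matrix (ι ⊕ κ) (ι ⊕ κ) ℝ}

omit [Fintype κ] in
lemma tendsto_restrictedResidual (hQ : Q.PosDef) (hA : Tendsto A l (𝓝 Q)) :
    Tendsto (fun n => restrictedResidual (A n)) l (𝓝 (restrictedResidual Q)) := by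
  have hQ₁₁ : Q.toBlocks₁₁.PosDef := hQ.submatrix Sum.inl_injective
  have hA₁₁ : Tendsto (fun n => (A n).toBlocks₁₁) l (𝓝 Q.toBlocks₁₁) :=
    ((continuous_id.matrix_submatrix Sum.inl Sum.inl).tendsto Q).comp hA
  have hA₁₂ : Tendsto (fun n => (A n).toBlocks₁₂) l (𝓝 Q.toBlocks₁₂) :=
    ((continuous_id.matrix_submatrix Sum.inl Sum.inr).tendsto Q).comp hA
  have hprod := tendsto_matrix_mul (tendsto_matrix_inv hQ₁₁.det_pos.ne' hA₁₁) hA₁₂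
  have hblocks : Continuous fun B : Matrix ι κ ℝ =>
      (fromBlocks 0 B 0 1 : Matrix (ι ⊕ κ) (ι ⊕ κ) ℝ) :=
    continuous_const.matrix_fromBlocks continuous_id continuous_const continuous_const
  exact (hblocks.tendsto _).comp hprod.neg

lemma tendsto_averagedEstimate (α σ2 : ℝ) (hQ : Q.PosDef) (hA : Tendsto A l (𝓝 Q))
    {b : γ → ι ⊕ κ → ℝ} {b₀ : ι ⊕ κ → ℝ} (hb : Tendsto b l (𝓝 b₀)) :
    Tendsto (fun n => averagedEstimate α σ2 (A n) (b n)) l (𝓝 (averagedEstimate α σ2 Q b₀)) := by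
  have hres := tendsto_mulVec (tendsto_restrictedResidual hQ hA) hb
  have hquad := tendsto_dotProduct hres (tendsto_mulVec hA hres)
  have hexp := ((hquad.sub_const (2 * σ2 * Fintype.card κ)).const_mul (α / σ2)).rexp
  exact hb.sub (((hexp.const_add 1).inv₀ (by positivity)).smul hres)

end AveragingLimits

section UnrestrictedLaw

open scoped MatrixOrder Matrix.Norms.L2Operator

variable {ι κ : Type*} [Fintype ι] [DecidableEq ι] [Fintype κ] {σ2 : ℝ} {A : Matrix ι ι ℝ}

/-- The law `N(0, σ² A⁻¹)` of the centred and scaled unrestricted estimator when `X'X / n = A`. It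
is realised as a linear image of `N(0, σ² I)`, so that the laws for different `A` are coupled. -/
def unrestrictedLaw (σ2 : ℝ) (A : Matrix ι ι ℝ) : Measure (ι → ℝ) :=
  (gaussPi ι σ2).map (CFC.sqrt A⁻¹ *ᵥ ·)

lemma sqrt_mul_transpose_sqrt (hA : A.PosSemidef) : CFC.sqrt A * (CFC.sqrt A)ᵀ = A := by
  have hsymm : (CFC.sqrt A)ᵀ = CFC.sqrt A := by
    rw [← conjTranspose_eq_transpose_of_trivial]
    exact (CFC.sqrt_nonneg A).isSelfAdjoint
  rw [hsymm]
  exact CFC.sqrt_mul_sqrt_self _ hA.nonneg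

lemma isUnit_det_sqrt_inv (hA : A.PosDef) : IsUnit (CFC.sqrt A⁻¹).det := by
  have h : IsUnit (CFC.sqrt A⁻¹ * (CFC.sqrt A⁻¹)ᵀ).det := by
    rw [sqrt_mul_transpose_sqrt hA.inv.posSemidef]
    exact hA.inv.det_pos.ne'.isUnit
  rw [det_mul] at h
  exact isUnit_of_mul_isUnit_left h

lemma tendsto_sqrt {γ : Type*} {l : Filter γ} {B : γ → Matrix ι ι ℝ} {Q : Matrix ι ι ℝ}
    (hB : ∀ᶠ n in l, (B n).PosSemidef) (hQ : Q.PosSemidef) (hBQ : Tendsto B l (𝓝 Q)) :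
    Tendsto (fun n => CFC.sqrt (B n)) l (𝓝 (CFC.sqrt Q)) :=
  ((CFC.continuousOn_sqrt (A := Matrix ι ι ℝ)) Q hQ.nonneg).tendsto.comp
    (tendsto_nhdsWithin_iff.2 ⟨hBQ, hB.mono fun _ hn => hn.nonneg⟩)

lemma map_mulVec_gaussPi_eq_unrestrictedLaw (hσ : 0 < σ2) (hA : A.PosDef) {M : Matrix ι κ ℝ}
    (hM : M * Mᵀ = A⁻¹) : (gaussPi κ σ2).map (M *ᵥ ·) = unrestrictedLaw σ2 A :=
  map_mulVec_gaussPi_congr hσ (hM.trans (sqrt_mul_transpose_sqrt hA.inv.posSemidef).symm)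

lemma unrestrictedLaw_apply (σ2 : ℝ) (A : Matrix ι ι ℝ) {E : Set (ι → ℝ)}
    (hE : MeasurableSet E) :
    unrestrictedLaw σ2 A E = gaussPi ι σ2 {z | CFC.sqrt A⁻¹ *ᵥ z ∈ E} :=
  Measure.map_apply (by fun_prop) hE

lemma isProbabilityMeasure_unrestrictedLaw (hσ : 0 < σ2) (A : Matrix ι ι ℝ) :
    IsProbabilityMeasure (unrestrictedLaw σ2 A) :=
  have := isProbabilityMeasure_gaussPi (ι := ι) hσ
  Measure.isProbabilityMeasure_map (by fun_prop)

lemma unrestrictedLaw_absolutelyContinuous (σ2 : ℝ) (hA : A.PosDef) :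
    unrestrictedLaw σ2 A ≪ volume := by
  have hdet : LinearMap.det (toLin' (CFC.sqrt A⁻¹)) ≠ 0 := by
    rw [LinearMap.det_toLin']
    exact (isUnit_det_sqrt_inv hA).ne_zero
  refine ((gaussPi_absolutelyContinuous σ2).map (by fun_prop)).trans ?_
  refine Measure.AbsolutelyContinuous.mk fun E hE hE0 => ?_
  rw [Measure.map_apply (by fun_prop) hE]
  exact (Measure.addHaar_preimage_linearMap volume hdet E).trans (by rw [hE0, mul_zero])

lemma isOpenPosMeasure_unrestrictedLaw (hσ : 0 < σ2) (hA : A.PosDef) :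
    (unrestrictedLaw σ2 A).IsOpenPosMeasure := by
  have := isOpenPosMeasure_gaussPi (ι := ι) hσ
  have hcont : Continuous (CFC.sqrt A⁻¹ *ᵥ ·) := by fun_prop
  exact hcont.isOpenPosMeasure_map
    (mulVec_surjective_iff_isUnit.2 ((isUnit_iff_isUnit_det _).2 (isUnit_det_sqrt_inv hA)))

end UnrestrictedLaw

section LocalCdf

variable {ι κ : Type*} [Fintype ι] [DecidableEq ι] [Fintype κ] [DecidableEq κ] {α σ2 : ℝ}
  {Q : Matrix (ι ⊕ κ) (ι ⊕ κ) ℝ}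

/-- The event `{√n(β̃ - ϑ) ≤ t}` when `X'X / n = A` and `ϑ = β + h / √n` for some `β` in the
restricted model, as a set of values `x` of the centred and scaled unrestricted estimator. -/
def localEvent (α σ2 : ℝ) (A : Matrix (ι ⊕ κ) (ι ⊕ κ) ℝ) (h t : ι ⊕ κ → ℝ) :
    Set (ι ⊕ κ → ℝ) :=
  {x | ∀ i, averagedEstimate α σ2 A (h + x) i - h i ≤ t i}

/-- The probability of `localEvent α σ2 A h t`, i.e. the distribution function of `√n(β̃ - ϑ)`. -/
def localCdf (α σ2 : ℝ) (A : Matrix (ι ⊕ κ) (ι ⊕ κ) ℝ) (h t : ι ⊕ κ → ℝ) : ℝ :=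
  (unrestrictedLaw σ2 A (localEvent α σ2 A h t)).toReal

lemma measurableSet_localEvent (α σ2 : ℝ) (A : Matrix (ι ⊕ κ) (ι ⊕ κ) ℝ) (h t : ι ⊕ κ → ℝ) :
    MeasurableSet (localEvent α σ2 A h t) := by
  have hcont : Continuous fun x => averagedEstimate α σ2 A (h + x) :=
    (continuous_averagedEstimate α σ2 A).comp (continuous_const_add h)
  rw [localEvent, Set.ofPred_forall]
  exact .iInter fun i => measurableSet_le
    (((continuous_apply i).comp hcont).measurable.sub_const _) measurable_const

open scoped MatrixOrder Matrix.Norms.L2Operator in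
lemma tendsto_localCdf {γ : Type*} {l : Filter γ} [l.IsCountablyGenerated]
    {A : γ → Matrix (ι ⊕ κ) (ι ⊕ κ) ℝ} (hσ : 0 < σ2) (hQ : Q.PosDef)
    (hpos : ∀ᶠ n in l, (A n).PosDef) (hA : Tendsto A l (𝓝 Q)) {h t : ι ⊕ κ → ℝ}
    (hnull : ∀ᵐ x, ∀ i, averagedEstimate α σ2 Q (h + x) i - h i ≠ t i) :
    Tendsto (fun n => localCdf α σ2 (A n) h t) l (𝓝 (localCdf α σ2 Q h t)) := by
  have := isProbabilityMeasure_gaussPi (ι := ι ⊕ κ) hσ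
  have hmeas (B : Matrix (ι ⊕ κ) (ι ⊕ κ) ℝ) := measurableSet_localEvent α σ2 B h t
  have hsqrt : Tendsto (fun n => CFC.sqrt (A n)⁻¹) l (𝓝 (CFC.sqrt Q⁻¹)) :=
    tendsto_sqrt (hpos.mono fun _ hn => hn.inv.posSemidef) hQ.inv.posSemidef
      (tendsto_matrix_inv hQ.det_pos.ne' hA)
  have hnull' : ∀ᵐ z ∂gaussPi (ι ⊕ κ) σ2, ∀ i,
      averagedEstimate α σ2 Q (h + CFC.sqrt Q⁻¹ *ᵥ z) i - h i ≠ t i :=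
    ae_of_ae_map (by fun_prop) ((unrestrictedLaw_absolutelyContinuous σ2 hQ).ae_le hnull)
  simp only [localCdf, unrestrictedLaw_apply _ _ (hmeas _)]
  refine (ENNReal.tendsto_toReal (measure_ne_top _ _)).comp
    (tendsto_measure_of_ae_tendsto_indicator_of_isFiniteMeasure l
      (measurableSet_preimage (by fun_prop) (hmeas Q))
      (fun n => measurableSet_preimage (by fun_prop) (hmeas (A n))) ?_)
  filter_upwards [hnull'] with z hz
  have hlim := tendsto_averagedEstimate α σ2 hQ hA
    ((tendsto_mulVec hsqrt (tendsto_const_nhds (x := z))).const_add h)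
  refine (eventually_all.2 fun i => ?_).mono fun n hn => forall_congr' hn
  have hlim_i := ((tendsto_pi_nhds.1 hlim) i).sub_const (h i)
  obtain hlt | hgt := (hz i).lt_or_gt
  · filter_upwards [hlim_i.eventually_lt_const hlt] with n hn
    exact iff_of_true hn.le hlt.le
  · filter_upwards [hlim_i.eventually_const_lt hgt] with n hn
    exact iff_of_false hn.not_ge hgt.not_ge

end LocalCdf

section SecondLocalParameter

variable {ι κ : Type*} [Fintype ι] [DecidableEq ι] [Fintype κ] [DecidableEq κ] {α σ2 s : ℝ}
  {Q : Matrix (ι ⊕ κ) (ι ⊕ κ) ℝ}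

lemma averagedEstimate_of_toBlocks₁₂_eq_zero (hQ12 : Q.toBlocks₁₂ = 0) (α σ2 : ℝ)
    (b : ι ⊕ κ → ℝ) :
    averagedEstimate α σ2 Q b =
      Sum.elim (b ∘ Sum.inl) ((1 - averagingWeight α σ2 Q b) • (b ∘ Sum.inr)) := by
  rw [averagedEstimate, restrictedResidual_mulVec, hQ12, Matrix.mul_zero, zero_mulVec, neg_zero]
  ext (i | j)
  · simp
  · simp [sub_mul]

/-- The local parameters `(0, (s - tⱼ)ⱼ)` at which the distribution functions at `t` are compared.
For `s = 0` and `Q₁₂ = 0` the limiting event is `{x ≤ t}`; for `s > 0` it is strictly larger. -/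
def shiftedLocalParam (t : ι ⊕ κ → ℝ) (s : ℝ) : ι ⊕ κ → ℝ :=
  Sum.elim 0 fun j => s - t (Sum.inr j)

lemma averagedEstimate_sub_inl (hQ12 : Q.toBlocks₁₂ = 0) (t x : ι ⊕ κ → ℝ) (i : ι) :
    averagedEstimate α σ2 Q (shiftedLocalParam t s + x) (Sum.inl i) -
      shiftedLocalParam t s (Sum.inl i) = x (Sum.inl i) := by
  simp [averagedEstimate_of_toBlocks₁₂_eq_zero hQ12, shiftedLocalParam]

lemma averagedEstimate_sub_inr (hQ12 : Q.toBlocks₁₂ = 0) (t x : ι ⊕ κ → ℝ) (j : κ) :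
    averagedEstimate α σ2 Q (shiftedLocalParam t s + x) (Sum.inr j) -
        shiftedLocalParam t s (Sum.inr j) =
      (1 - averagingWeight α σ2 Q (shiftedLocalParam t s + x)) *
        (s + (x (Sum.inr j) - t (Sum.inr j))) - s + t (Sum.inr j) := by
  simp only [averagedEstimate_of_toBlocks₁₂_eq_zero hQ12, shiftedLocalParam, Sum.elim_inr,
    Pi.smul_apply, Function.comp_apply, Pi.add_apply, smul_eq_mul]
  ring

lemma ae_averagedEstimate_inr_ne_zero (hQ12 : Q.toBlocks₁₂ = 0) (α σ2 : ℝ) (j : κ) :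
    ∀ᵐ y, averagedEstimate α σ2 Q y (Sum.inr j) ≠ 0 := by
  filter_upwards [Measure.ae_eval_ne (μ := fun _ : ι ⊕ κ => (volume : Measure ℝ))
    (Sum.inr j) 0] with y hy
  rw [averagedEstimate_of_toBlocks₁₂_eq_zero hQ12]
  exact mul_ne_zero (sub_pos.2 (averagingWeight_lt_one α σ2 y)).ne' hy

lemma exists_pos_forall_ae_averagedEstimate_inr_ne (α σ2 : ℝ) (Q : Matrix (ι ⊕ κ) (ι ⊕ κ) ℝ) :
    ∃ s > 0, ∀ j, ∀ᵐ y, averagedEstimate α σ2 Q y (Sum.inr j) ≠ s := by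
  have hcountable :
      {s | ∃ j, 0 < volume {y | averagedEstimate α σ2 Q y (Sum.inr j) = s}}.Countable := by
    rw [Set.ofPred_exists]
    exact Set.countable_iUnion fun j => Measure.countable_meas_level_set_pos
      ((continuous_apply _).comp (continuous_averagedEstimate α σ2 Q)).measurable
  obtain ⟨s, hs, hpos⟩ :=
    (hcountable.dense_compl ℝ).exists_mem_open isOpen_Ioi (Set.nonempty_Ioi (a := 0))
  refine ⟨s, hpos, fun j => ?_⟩
  simpa [ae_iff] using not_exists.1 hs j

lemma ae_averagedEstimate_sub_ne (hQ12 : Q.toBlocks₁₂ = 0)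
    (hs : ∀ j, ∀ᵐ y, averagedEstimate α σ2 Q y (Sum.inr j) ≠ s) (t : ι ⊕ κ → ℝ) :
    ∀ᵐ x, ∀ i, averagedEstimate α σ2 Q (shiftedLocalParam t s + x) i -
      shiftedLocalParam t s i ≠ t i := by
  refine ae_all_iff.2 fun i => ?_
  cases i with
  | inl i =>
    simp only [averagedEstimate_sub_inl hQ12]
    exact Measure.ae_eval_ne (μ := fun _ => volume) (Sum.inl i) _
  | inr j =>
    have hshift := (measurePreserving_add_left volume
      (shiftedLocalParam t s)).quasiMeasurePreserving.ae (hs j)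
    filter_upwards [hshift] with x hx hxt
    exact hx (by simpa [shiftedLocalParam, sub_eq_iff_eq_add] using hxt)

lemma localEvent_shiftedLocalParam_zero (hQ12 : Q.toBlocks₁₂ = 0) (α σ2 : ℝ) (t : ι ⊕ κ → ℝ) :
    localEvent α σ2 Q (shiftedLocalParam t 0) t = Set.Iic t := by
  ext x
  have hweight : 0 < 1 - averagingWeight α σ2 Q (shiftedLocalParam t 0 + x) :=
    sub_pos.2 (averagingWeight_lt_one α σ2 _)
  have hcoord (j : κ) : (1 - averagingWeight α σ2 Q (shiftedLocalParam t 0 + x)) *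
      (x (Sum.inr j) - t (Sum.inr j)) ≤ 0 ↔ x (Sum.inr j) ≤ t (Sum.inr j) := by
    rw [← sub_nonpos (a := x _)]
    exact ⟨(nonpos_of_mul_nonpos_right · hweight), mul_nonpos_of_nonneg_of_nonpos hweight.le⟩
  simp only [localEvent, Set.mem_ofPred_eq, Set.mem_Iic, Pi.le_def, Sum.forall,
    averagedEstimate_sub_inl hQ12, averagedEstimate_sub_inr hQ12, zero_add, sub_zero,
    add_le_iff_nonpos_left, hcoord]

lemma Iic_subset_localEvent_shiftedLocalParam (hQ12 : Q.toBlocks₁₂ = 0) (α σ2 : ℝ)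
    (hs : 0 ≤ s) (t : ι ⊕ κ → ℝ) :
    Set.Iic t ⊆ localEvent α σ2 Q (shiftedLocalParam t s) t := by
  rintro x hx (i | j)
  · rw [averagedEstimate_sub_inl hQ12]
    exact hx _
  · have hpos := averagingWeight_pos (G := Q) α σ2 (shiftedLocalParam t s + x)
    have hlt := averagingWeight_lt_one (G := Q) α σ2 (shiftedLocalParam t s + x)
    have hxt := hx (Sum.inr j)
    rw [averagedEstimate_sub_inr hQ12]
    nlinarith

lemma nonempty_interior_localEvent_diff_Iic [Nonempty κ] (hQ12 : Q.toBlocks₁₂ = 0) (α σ2 : ℝ)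
    (hs : 0 < s) (t : ι ⊕ κ → ℝ) :
    (interior (localEvent α σ2 Q (shiftedLocalParam t s) t \ Set.Iic t)).Nonempty := by
  obtain ⟨j⟩ := ‹Nonempty κ›
  set h := shiftedLocalParam t s
  let V := {x | ∀ i, averagedEstimate α σ2 Q (h + x) i - h i < t i}
  let W := {x : ι ⊕ κ → ℝ | t (Sum.inr j) < x (Sum.inr j)}
  have hcont : Continuous fun x => averagedEstimate α σ2 Q (h + x) :=
    (continuous_averagedEstimate α σ2 Q).comp (continuous_const_add h)
  have hV : IsOpen V := by
    simp only [V, Set.ofPred_forall]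
    exact isOpen_iInter_of_finite fun i =>
      isOpen_lt (((continuous_apply i).comp hcont).sub continuous_const) continuous_const
  have hW : IsOpen W := isOpen_lt continuous_const (continuous_apply _)
  have hsub : V ∩ W ⊆ localEvent α σ2 Q h t \ Set.Iic t :=
    fun x hx => ⟨fun i => (hx.1 i).le, fun hxt => (hx.2.trans_le (hxt _)).false⟩
  let x₀ : ι ⊕ κ → ℝ := Sum.elim (fun i => t (Sum.inl i) - 1) (t ∘ Sum.inr)
  have hx₀ : x₀ ∈ V := by
    rintro (i | k)
    · rw [averagedEstimate_sub_inl hQ12]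
      exact sub_one_lt _
    · have hpos := averagingWeight_pos (G := Q) α σ2 (h + x₀)
      rw [averagedEstimate_sub_inr hQ12]
      simp only [x₀, Sum.elim_inr, Function.comp_apply, sub_self, add_zero]
      nlinarith
  have hcurve : Tendsto (fun ε : ℝ => x₀ + ε • (1 : ι ⊕ κ → ℝ)) (𝓝[>] 0) (𝓝 x₀) := by
    have : Continuous fun ε : ℝ => x₀ + ε • (1 : ι ⊕ κ → ℝ) := by fun_prop
    exact (this.tendsto' 0 x₀ (by simp)).mono_left nhdsWithin_le_nhds
  obtain ⟨ε, hεV, hε⟩ := ((hcurve.eventually (hV.mem_nhds hx₀)).and self_mem_nhdsWithin).exists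
  have hεW : x₀ + ε • (1 : ι ⊕ κ → ℝ) ∈ W := by simpa [W, x₀] using hε
  exact ⟨_, interior_maximal hsub (hV.inter hW) ⟨hεV, hεW⟩⟩

lemma localCdf_shiftedLocalParam_lt [Nonempty κ] (hσ : 0 < σ2) (hQ : Q.PosDef)
    (hQ12 : Q.toBlocks₁₂ = 0) (α : ℝ) (hs : 0 < s) (t : ι ⊕ κ → ℝ) :
    localCdf α σ2 Q (shiftedLocalParam t 0) t < localCdf α σ2 Q (shiftedLocalParam t s) t := by
  have := isProbabilityMeasure_unrestrictedLaw hσ Q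
  have := isOpenPosMeasure_unrestrictedLaw hσ hQ
  have hpos := Measure.measure_pos_of_nonempty_interior (unrestrictedLaw σ2 Q)
    (nonempty_interior_localEvent_diff_Iic hQ12 α σ2 hs t)
  rw [measure_sdiff (Iic_subset_localEvent_shiftedLocalParam hQ12 α σ2 hs.le t)
    measurableSet_Iic.nullMeasurableSet (measure_ne_top _ _), tsub_pos_iff_lt] at hpos
  rw [localCdf, localCdf, localEvent_shiftedLocalParam_zero hQ12]
  exact ENNReal.toReal_strict_mono (measure_ne_top _ _) hpos

end SecondLocalParameter

section Asymptotics

variable {σ2 : ℝ} {n k₁ k₂ : ℕ}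

/-- The distribution function `F_{n,ϑ,σ}(t)` of `√n(β̃ - ϑ)`. -/
def mavgCdf (α σ2 : ℝ) (X : Matrix (Fin n) (Fin k₁ ⊕ Fin k₂) ℝ)
    (ϑ t : Fin k₁ ⊕ Fin k₂ → ℝ) : ℝ :=
  (Pmeas X ϑ σ2 {Y | ∀ i, Real.sqrt n * (mavg α σ2 X Y i - ϑ i) ≤ t i}).toReal

lemma measurableSet_mavg_le {X : Matrix (Fin n) (Fin k₁ ⊕ Fin k₂) ℝ} (hX : (Xᵀ * X).PosDef)
    (α σ2 : ℝ) (ϑ t : Fin k₁ ⊕ Fin k₂ → ℝ) :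
    MeasurableSet {Y | ∀ i, √(n : ℝ) * (mavg α σ2 X Y i - ϑ i) ≤ t i} := by
  rw [Set.ofPred_forall]
  exact .iInter fun i => measurableSet_le (((measurable_pi_apply i).comp
    (measurable_mavg hX α σ2)).sub_const _ |>.const_mul _) measurable_const

lemma sqrt_smul_mul_transpose {X : Matrix (Fin n) (Fin k₁ ⊕ Fin k₂) ℝ}
    (hX : (Xᵀ * X).PosDef) (hn : n ≠ 0) :
    (√n • ((Xᵀ * X)⁻¹ * Xᵀ)) * (√n • ((Xᵀ * X)⁻¹ * Xᵀ))ᵀ = ((n : ℝ)⁻¹ • (Xᵀ * X))⁻¹ := by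
  have hsymm : ((Xᵀ * X)⁻¹)ᵀ = (Xᵀ * X)⁻¹ := by
    rw [transpose_nonsing_inv, transpose_mul, transpose_transpose]
  have hinv : ((n : ℝ)⁻¹ • (Xᵀ * X))⁻¹ = (n : ℝ)⁻¹⁻¹ • (Xᵀ * X)⁻¹ :=
    (Xᵀ * X).inv_smul' (Units.mk0 _ (inv_ne_zero (Nat.cast_ne_zero.2 hn)))
      hX.det_pos.ne'.isUnit
  rw [hinv, inv_inv, transpose_smul, transpose_mul, transpose_transpose, hsymm,
    Matrix.smul_mul, Matrix.mul_smul, smul_smul, Real.mul_self_sqrt n.cast_nonneg,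
    Matrix.mul_assoc, ← Matrix.mul_assoc Xᵀ, mul_nonsing_inv _ hX.det_pos.ne'.isUnit,
    Matrix.mul_one]

lemma sqrt_smul_mavg_sub {X : Matrix (Fin n) (Fin k₁ ⊕ Fin k₂) ℝ} (hX : (Xᵀ * X).PosDef)
    (hn : n ≠ 0) (α σ2 : ℝ) {β : Fin k₁ ⊕ Fin k₂ → ℝ} (hβ : β ∘ Sum.inr = 0)
    (h : Fin k₁ ⊕ Fin k₂ → ℝ) (u : Fin n → ℝ) :
    √n • (mavg α σ2 X (X *ᵥ (β + (√n)⁻¹ • h) + u) - (β + (√n)⁻¹ • h)) =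
      averagedEstimate α σ2 ((n : ℝ)⁻¹ • (Xᵀ * X))
        (h + (√n • ((Xᵀ * X)⁻¹ * Xᵀ)) *ᵥ u) - h := by
  have hsqrt : √(n : ℝ) ≠ 0 := Real.sqrt_ne_zero'.2 (by positivity)
  have hscale := smul_averagedEstimate_sub α σ2 hsqrt hX hβ
    (β + (√n)⁻¹ • h + ((Xᵀ * X)⁻¹ * Xᵀ) *ᵥ u)
  rw [Real.sq_sqrt n.cast_nonneg, add_assoc, add_sub_cancel_left, smul_add,
    smul_inv_smul₀ hsqrt, ← smul_mulVec, ← add_assoc] at hscale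
  rw [mavg_eq_averagedEstimate hX, betaU_mulVec_add hX, ← hscale, ← sub_sub,
    smul_sub _ _ ((√n)⁻¹ • h), smul_inv_smul₀ hsqrt]

lemma mavgCdf_add_smul (hσ : 0 < σ2) {X : Matrix (Fin n) (Fin k₁ ⊕ Fin k₂) ℝ}
    (hX : (Xᵀ * X).PosDef) (hn : n ≠ 0) (α : ℝ) {β : Fin k₁ ⊕ Fin k₂ → ℝ}
    (hβ : β ∘ Sum.inr = 0) (h t : Fin k₁ ⊕ Fin k₂ → ℝ) :
    mavgCdf α σ2 X (β + (√n)⁻¹ • h) t = localCdf α σ2 ((n : ℝ)⁻¹ • (Xᵀ * X)) h t := by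
  have hA : ((n : ℝ)⁻¹ • (Xᵀ * X)).PosDef := hX.smul (by positivity)
  rw [mavgCdf, localCdf, Pmeas_apply _ _ _ (measurableSet_mavg_le hX α σ2 _ t),
    ← map_mulVec_gaussPi_eq_unrestrictedLaw hσ hA (sqrt_smul_mul_transpose hX hn),
    Measure.map_apply (by fun_prop) (measurableSet_localEvent _ _ _ _ _)]
  congr 2
  ext u
  exact forall_congr' fun i =>
    iff_of_eq (congrArg (· ≤ t i) (congrFun (sqrt_smul_mavg_sub hX hn α σ2 hβ h u) i))

variable {X : ∀ n : ℕ, Matrix (Fin n) (Fin k₁ ⊕ Fin k₂) ℝ}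
  {Q : Matrix (Fin k₁ ⊕ Fin k₂) (Fin k₁ ⊕ Fin k₂) ℝ} {β : Fin k₁ ⊕ Fin k₂ → ℝ}

lemma eventually_posDef_gram (hQ : Q.PosDef)
    (hlim : Tendsto (fun n : ℕ => (n : ℝ)⁻¹ • ((X n)ᵀ * X n)) atTop (𝓝 Q)) :
    ∀ᶠ n in atTop, ((X n)ᵀ * X n).PosDef := by
  have hpos (n : ℕ) : ((n : ℝ)⁻¹ • ((X n)ᵀ * X n)).PosSemidef := by
    rw [← conjTranspose_eq_transpose_of_trivial]
    exact (posSemidef_conjTranspose_mul_self _).smul (by positivity)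
  filter_upwards [eventually_posDef_of_tendsto hQ hpos hlim, eventually_ne_atTop 0]
    with n hn hn0
  have hsmul := hn.smul (show (0 : ℝ) < n by positivity)
  rwa [smul_inv_smul₀ (Nat.cast_ne_zero.2 hn0)] at hsmul

lemma tendsto_mavgCdf (hσ : 0 < σ2) (hQ : Q.PosDef)
    (hlim : Tendsto (fun n : ℕ => (n : ℝ)⁻¹ • ((X n)ᵀ * X n)) atTop (𝓝 Q))
    (hβ : β ∘ Sum.inr = 0) {α : ℝ} {h t : Fin k₁ ⊕ Fin k₂ → ℝ}
    (hnull : ∀ᵐ x, ∀ i, averagedEstimate α σ2 Q (h + x) i - h i ≠ t i) :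
    Tendsto (fun n : ℕ => mavgCdf α σ2 (X n) (β + (√n)⁻¹ • h) t) atTop
      (𝓝 (localCdf α σ2 Q h t)) := by
  have hgram := eventually_posDef_gram hQ hlim
  have hpos : ∀ᶠ n : ℕ in atTop, ((n : ℝ)⁻¹ • ((X n)ᵀ * X n)).PosDef := by
    filter_upwards [hgram, eventually_ne_atTop 0] with n hn hn0
    exact hn.smul (by positivity)
  refine (tendsto_localCdf hσ hQ hpos hlim hnull).congr' ?_
  filter_upwards [hgram, eventually_ne_atTop 0] with n hn hn0
  exact (mavgCdf_add_smul hσ hn hn0 α hβ h t).symm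

lemma tendsto_Pmeas_add_smul_zero (hσ : 0 < σ2)
    (hlim : Tendsto (fun n : ℕ => (n : ℝ)⁻¹ • ((X n)ᵀ * X n)) atTop (𝓝 Q))
    (h : Fin k₁ ⊕ Fin k₂ → ℝ) {E : ∀ n : ℕ, Set (Fin n → ℝ)} (hE : ∀ n, MeasurableSet (E n))
    (h0 : Tendsto (fun n => Pmeas (X n) β σ2 (E n)) atTop (𝓝 0)) :
    Tendsto (fun n : ℕ => Pmeas (X n) (β + (√n)⁻¹ • h) σ2 (E n)) atTop (𝓝 0) := by
  have hquad : Tendsto (fun n : ℕ => h ⬝ᵥ ((n : ℝ)⁻¹ • ((X n)ᵀ * X n)) *ᵥ h) atTop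
      (𝓝 (h ⬝ᵥ Q *ᵥ h)) :=
    tendsto_dotProduct tendsto_const_nhds (tendsto_mulVec hlim tendsto_const_nhds)
  refine tendsto_Pmeas_zero_of_eventually_quadForm_le (β := fun _ => β) hσ hE
    (C := h ⬝ᵥ Q *ᵥ h + 1) ?_ h0
  filter_upwards [hquad.eventually_le_const (lt_add_one _)] with n hn
  refine le_of_eq_of_le ?_ hn
  simp only [add_sub_cancel_left, mulVec_smul, smul_mulVec, dotProduct_smul, smul_dotProduct,
    smul_smul, ← mul_inv, Real.mul_self_sqrt n.cast_nonneg]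

lemma eventually_enorm2_add_smul_sub_lt (β : Fin k₁ ⊕ Fin k₂ → ℝ)
    {h : Fin k₁ ⊕ Fin k₂ → ℝ} {ρ : ℝ} (hρ : enorm2 h < ρ) :
    ∀ᶠ n : ℕ in atTop, enorm2 (β + (√n)⁻¹ • h - β) < ρ / Real.sqrt n := by
  filter_upwards [eventually_ne_atTop 0] with n hn
  rw [add_sub_cancel_left, enorm2_smul (by positivity), inv_mul_eq_div]
  gcongr

end Asymptotics

theorem statement12_general {k₁ k₂ : ℕ} (hk₂ : 0 < k₂)
    (Q : Matrix (Fin k₁ ⊕ Fin k₂) (Fin k₁ ⊕ Fin k₂) ℝ) (hQ : Q.PosDef)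
    (hQ12 : Q.toBlocks₁₂ = 0) (σ2 α : ℝ) (hσ : 0 < σ2) (t : Fin k₁ ⊕ Fin k₂ → ℝ) :
    ∃ δ₀ : ℝ, 0 < δ₀ ∧ ∃ ρ₀ : ℝ, 0 < ρ₀ ∧
      ∀ X : ∀ n : ℕ, Matrix (Fin n) (Fin k₁ ⊕ Fin k₂) ℝ,
        Tendsto (fun n : ℕ => (n : ℝ)⁻¹ • ((X n)ᵀ * X n)) atTop (𝓝 Q) →
        ∀ β : Fin k₁ ⊕ Fin k₂ → ℝ, β ∘ Sum.inr = 0 →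
          ∀ Fhat : ∀ n : ℕ, (Fin n → ℝ) → ℝ, (∀ n, Measurable (Fhat n)) →
            (∀ δ : ℝ, 0 < δ → Tendsto (fun n : ℕ => Pmeas (X n) β σ2
              {Y | δ < |Fhat n Y - mavgCdf α σ2 (X n) β t|}) atTop (𝓝 0)) →
            Tendsto (fun n : ℕ => ⨆ ϑ, ⨆ (_ : enorm2 (ϑ - β) < ρ₀ / Real.sqrt n),
              Pmeas (X n) ϑ σ2 {Y | δ₀ < |Fhat n Y - mavgCdf α σ2 (X n) ϑ t|})
              atTop (𝓝 1) := by
  have : Nonempty (Fin k₂) := ⟨⟨0, hk₂⟩⟩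
  obtain ⟨s, hs, hnull⟩ := exists_pos_forall_ae_averagedEstimate_inr_ne α σ2 Q
  have hne₀ := ae_averagedEstimate_sub_ne hQ12 (ae_averagedEstimate_inr_ne_zero hQ12 α σ2) t
  have hne₁ := ae_averagedEstimate_sub_ne hQ12 hnull t
  set h₀ := shiftedLocalParam t 0
  set h₁ := shiftedLocalParam t s
  have hgap : 0 < |localCdf α σ2 Q h₀ t - localCdf α σ2 Q h₁ t| / 4 :=
    div_pos (abs_pos.2 (sub_ne_zero.2 (localCdf_shiftedLocalParam_lt hσ hQ hQ12 α hs t).ne))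
      four_pos
  obtain ⟨δ₀, hδ₀, hδ₀gap⟩ := exists_between hgap
  obtain ⟨ρ₀, hρ₀⟩ := exists_gt (max 0 (max (enorm2 h₀) (enorm2 h₁)))
  simp only [max_lt_iff] at hρ₀
  refine ⟨δ₀, hδ₀, ρ₀, hρ₀.1, fun X hlim β hβ Fhat hF hcons => ?_⟩
  have (n : ℕ) (ϑ) := isProbabilityMeasure_Pmeas (X n) ϑ hσ
  have hE (n : ℕ) : MeasurableSet {Y | δ₀ < |Fhat n Y - mavgCdf α σ2 (X n) β t|} :=
    measurableSet_lt measurable_const ((hF n).sub_const _).abs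
  have hsep := ((tendsto_mavgCdf hσ hQ hlim hβ hne₀).sub
    (tendsto_mavgCdf hσ hQ hlim hβ hne₁)).abs.eventually_const_lt
      ((lt_div_iff₀' four_pos).1 hδ₀gap)
  exact tendsto_iSup_measure_lt_abs_sub (fun n ϑ => Pmeas (X n) ϑ σ2)
    (eventually_enorm2_add_smul_sub_lt β hρ₀.2.1) (eventually_enorm2_add_smul_sub_lt β hρ₀.2.2)
    hsep (tendsto_Pmeas_add_smul_zero hσ hlim h₀ hE (hcons δ₀ hδ₀))
    (tendsto_Pmeas_add_smul_zero hσ hlim h₁ hE (hcons δ₀ hδ₀))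

/-- impossibility result. Any estimator of `F_{n,β,σ}(t)` that is consistent
at a point `β` of the restricted model suffers from the worst-case breakdown (17) over
shrinking balls around `β`. -/
theorem statement12 {k₁ k₂ : ℕ} (hk₁ : 0 < k₁) (hk₂ : k₂ = 1)
    (X : ∀ n : ℕ, Matrix (Fin n) (Fin k₁ ⊕ Fin k₂) ℝ)
    (hX : ∀ n, k₁ + k₂ ≤ n → (X n).rank = k₁ + k₂)
    (Q : Matrix (Fin k₁ ⊕ Fin k₂) (Fin k₁ ⊕ Fin k₂) ℝ) (hQ : Q.PosDef)
    (hQ12 : Q.toBlocks₁₂ = 0)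
    (hlim : Tendsto (fun n : ℕ => (n : ℝ)⁻¹ • ((X n)ᵀ * X n)) atTop (𝓝 Q))
    (σ α : ℝ) (hσ : 0 < σ) (hα : 0 < α) :
    ∀ t : (Fin k₁ ⊕ Fin k₂) → ℝ, ∃ δ₀ : ℝ, 0 < δ₀ ∧ ∃ ρ₀ : ℝ, 0 < ρ₀ ∧
      ∀ β : (Fin k₁ ⊕ Fin k₂) → ℝ, β ∘ Sum.inr = 0 →
        ∀ Fhat : ∀ n : ℕ, (Fin n → ℝ) → ℝ, (∀ n, Measurable (Fhat n)) →
          (∀ δ : ℝ, 0 < δ →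
            Tendsto (fun n : ℕ => Pmeas (X n) β (σ ^ 2)
                {Y | δ < |Fhat n Y -
                  (Pmeas (X n) β (σ ^ 2)
                    {Y' | ∀ i, Real.sqrt n * (mavg α (σ ^ 2) (X n) Y' i - β i) ≤
                      t i}).toReal|})
              atTop (𝓝 (0 : ℝ≥0∞))) →
          Tendsto (fun n : ℕ => ⨆ ϑ : (Fin k₁ ⊕ Fin k₂) → ℝ,
              ⨆ (_ : enorm2 (ϑ - β) < ρ₀ / Real.sqrt n),
              Pmeas (X n) ϑ (σ ^ 2)
                {Y | δ₀ < |Fhat n Y -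
                  (Pmeas (X n) ϑ (σ ^ 2)
                    {Y' | ∀ i, Real.sqrt n * (mavg α (σ ^ 2) (X n) Y' i - ϑ i) ≤
                      t i}).toReal|})
            atTop (𝓝 (1 : ℝ≥0∞)) := by
  intro t
  obtain ⟨δ₀, hδ₀, ρ₀, hρ₀, h⟩ :=
    statement12_general (by omega) Q hQ hQ12 (σ ^ 2) α (by positivity) t
  exact ⟨δ₀, hδ₀, ρ₀, hρ₀, h X hlim⟩

end
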